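/- In the MDP M_mab, the total T-step reward of the best stationary policy satisfies sup_{π∈Π} ∑_{t=1}^T r(h_t^π, π(h_t^π)) ≤ T·ρ* + Δ, where ρ* is the optimal average (per-step) reward. -/

import Mathlib

/-!
STATEMENT 1: In the congested-bandit MDP `M_mab`, the total `T`-step reward of the
best stationary policy satisfies
  `sup_{π∈Π} ∑_{t=1}^T r(h_t^π, π(h_t^π)) ≤ T·ρ* + Δ`,
where `ρ*` is the optimal average (per-step) reward.
-/

open Filter Finset

/-- Histories of the last `Δ` arm choices among `K` arms. -/
abbrev Hist (K Δ : ℕ) := Fin Δ → Fin K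

/-- Number of occurrences `#(h,a)` of arm `a` in the history `h`. -/
def cnt {K Δ : ℕ} (h : Hist K Δ) (a : Fin K) : ℕ :=
  (Finset.univ.filter fun i => h i = a).card

/-- Deterministic history update `h' = [h_{2:Δ}, a]`. -/
def shift {K Δ : ℕ} (h : Hist K Δ) (a : Fin K) : Hist K Δ :=
  fun i => if hi : (i : ℕ) + 1 < Δ then h ⟨(i : ℕ) + 1, hi⟩ else a

/-- Mean reward `r(h,a) = f_cong(a, #(h,a)) · μ_a`. -/
def rew {K Δ : ℕ} (μ : Fin K → ℝ) (f : Fin K → ℕ → ℝ) (h : Hist K Δ) (a : Fin K) : ℝ :=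
  f a (cnt h a) * μ a

/-- History at time `t` obtained by running the stationary policy `π` from `h0`. -/
def trajP {K Δ : ℕ} (h0 : Hist K Δ) (π : Hist K Δ → Fin K) : ℕ → Hist K Δ
  | 0 => h0
  | t + 1 => shift (trajP h0 π t) (π (trajP h0 π t))

/-- Run a list of actions. -/
def runL {K Δ : ℕ} (h : Hist K Δ) : List (Fin K) → Hist K Δ
  | [] => h
  | a :: l => runL (shift h a) l

/-- Total reward along a list of actions. -/
def rewL {K Δ : ℕ} (μ : Fin K → ℝ) (f : Fin K → ℕ → ℝ) (h : Hist K Δ) : List (Fin K) → ℝ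
  | [] => 0
  | a :: l => rew μ f h a + rewL μ f (shift h a) l

theorem runL_append {K Δ : ℕ} (h : Hist K Δ) (l m : List (Fin K)) :
    runL h (l ++ m) = runL (runL h l) m := by
  induction l generalizing h with
  | nil => rfl
  | cons a l ih => exact ih _

theorem rewL_append {K Δ : ℕ} (μ : Fin K → ℝ) (f : Fin K → ℕ → ℝ) (h : Hist K Δ)
    (l m : List (Fin K)) :
    rewL μ f h (l ++ m) = rewL μ f h l + rewL μ f (runL h l) m := by
  induction l generalizing h with
  | nil => simp [rewL, runL]
  | cons a l ih => simp only [List.cons_append, rewL, runL, ih]; ring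

theorem runL_spec {K Δ : ℕ} (h : Hist K Δ) (l : List (Fin K)) (i : Fin Δ) :
    (∀ hi : (i : ℕ) + l.length < Δ, runL h l i = h ⟨i + l.length, hi⟩) ∧
    (Δ ≤ (i : ℕ) + l.length → l[(i : ℕ) + l.length - Δ]? = some (runL h l i)) := by
  induction l generalizing h with
  | nil =>
    refine ⟨fun hi => rfl, fun hi => ?_⟩
    have := i.2
    simp at hi
    omega
  | cons a l ih =>
    obtain ⟨h1, h2⟩ := ih (shift h a)
    simp only [List.length_cons, runL]
    refine ⟨fun hi => ?_, fun hi => ?_⟩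
    · rw [h1 (by omega)]
      simp only [shift]
      rw [dif_pos (by omega)]
      rfl
    · by_cases hc : (i : ℕ) + l.length < Δ
      · rw [h1 hc]
        have e : (i : ℕ) + (l.length + 1) - Δ = 0 := by omega
        rw [e]
        simp only [shift]
        rw [dif_neg (by omega)]
        rfl
      · have e : (i : ℕ) + (l.length + 1) - Δ = ((i : ℕ) + l.length - Δ) + 1 := by omega
        rw [e, List.getElem?_cons_succ]
        exact h2 (by omega)

theorem runL_ofFn {K Δ : ℕ} (h g : Hist K Δ) : runL h (List.ofFn g) = g := by
  funext i
  have h2 := (runL_spec h (List.ofFn g) i).2 (by simp)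
  simp at h2
  exact h2.symm

theorem trajP_add {K Δ : ℕ} (h : Hist K Δ) (π : Hist K Δ → Fin K) (s t : ℕ) :
    trajP h π (s + t) = trajP (trajP h π s) π t := by
  induction t with
  | zero => rfl
  | succ t ih =>
    rw [← Nat.add_assoc]
    simp only [trajP, ih]

theorem follow {K Δ : ℕ} (μ : Fin K → ℝ) (f : Fin K → ℕ → ℝ) (π : Hist K Δ → Fin K)
    (l : List (Fin K)) (h : Hist K Δ)
    (H : ∀ i (hi : i < l.length), π (runL h (l.take i)) = l[i]) :
    trajP h π l.length = runL h l ∧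
    ∑ t ∈ Finset.range l.length, rew μ f (trajP h π t) (π (trajP h π t)) = rewL μ f h l := by
  induction l generalizing h with
  | nil => simp [trajP, runL, rewL]
  | cons a l ih =>
    have ha : π h = a := H 0 (Nat.succ_pos _)
    have hs : ∀ t, trajP h π (t + 1) = trajP (shift h a) π t := by
      intro t
      rw [Nat.add_comm, trajP_add]
      simp [trajP, ha]
    obtain ⟨h1, h2⟩ := ih (shift h a) (fun i hi =>
      H (i + 1) (Nat.succ_lt_succ hi))
    refine ⟨?_, ?_⟩
    · rw [List.length_cons, hs, h1]; rfl
    · rw [List.length_cons, Finset.sum_range_succ']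
      simp only [hs, h2, rewL]
      simp only [trajP, ha]
      ring

/-- The greedy action list of a policy. -/
theorem exists_list {K Δ : ℕ} (μ : Fin K → ℝ) (f : Fin K → ℕ → ℝ) (π : Hist K Δ → Fin K)
    (h : Hist K Δ) (T : ℕ) : ∃ l : List (Fin K), l.length = T ∧
    ∑ t ∈ Finset.range T, rew μ f (trajP h π t) (π (trajP h π t)) = rewL μ f h l ∧
    trajP h π T = runL h l := by
  induction T with
  | zero => exact ⟨[], rfl, by simp [rewL], rfl⟩
  | succ T ih =>
    obtain ⟨l, h1, h2, h3⟩ := ih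
    refine ⟨l ++ [π (trajP h π T)], by simp [h1], ?_, ?_⟩
    · rw [Finset.sum_range_succ, h2, rewL_append, ← h3]; simp [rewL]
    · rw [runL_append, ← h3]; rfl

theorem exists_policy {K Δ : ℕ} (h0 h : Hist K Δ) (l : List (Fin K)) (hl : l ≠ [])
    (hc : runL h l = h)
    (hd : ∀ i j, i < j → j < l.length → runL h (l.take i) ≠ runL h (l.take j)) :
    ∃ (π : Hist K Δ → Fin K) (τ : ℕ), trajP h0 π τ = h ∧
      ∀ i (hi : i < l.length), π (runL h (l.take i)) = l[i] := by
  classical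
  let C : Hist K Δ → Prop := fun x => ∃ i, i < l.length ∧ runL h (l.take i) = x
  have hpos : 0 < l.length := List.length_pos_iff.2 hl
  have hCh : C h := ⟨0, hpos, by simp [runL]⟩
  have hex : ∀ x : Hist K Δ, ∃ a : Fin K,
      (∀ i (hi : i < l.length), runL h (l.take i) = x → a = l[i]) ∧
      (¬ C x → ∀ m, C (runL x m) → ∃ m', m'.length < m.length ∧ C (runL (shift x a) m')) := by
    intro x
    by_cases hx : C x
    · obtain ⟨i, hi, hxi⟩ := hx
      refine ⟨l[i], fun j hj hxj => ?_, fun hn => absurd ⟨i, hi, hxi⟩ hn⟩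
      rcases lt_trichotomy i j with hij | hij | hij
      · exact absurd (hxi.trans hxj.symm) (hd i j hij hj)
      · subst hij; rfl
      · exact absurd (hxj.trans hxi.symm) (hd j i hij hi)
    · have hne : ∃ n, ∃ m : List (Fin K), m.length = n ∧ C (runL x m) :=
        ⟨_, List.ofFn h, rfl, by rw [runL_ofFn]; exact hCh⟩
      obtain ⟨m, hm, hmC⟩ := Nat.find_spec hne
      cases m with
      | nil => exact absurd hmC hx
      | cons a m' =>
        refine ⟨a, fun i hi hxi => absurd ⟨i, hi, hxi⟩ hx, fun _ m2 hm2 => ⟨m', ?_, hmC⟩⟩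
        have := Nat.find_min' hne ⟨m2, rfl, hm2⟩
        rw [← hm, List.length_cons] at this
        omega
  choose π hπ1 hπ2 using hex
  have hF : ∀ i (hi : i < l.length), π (runL h (l.take i)) = l[i] :=
    fun i hi => hπ1 _ i hi rfl
  have hreach : ∀ n (x : Hist K Δ) (m : List (Fin K)), m.length < n → C (runL x m) →
      ∃ τ, C (trajP x π τ) := by
    intro n
    induction n with
    | zero => intro x m hm; omega
    | succ n ih =>
      intro x m hm hC
      by_cases hx : C x
      · exact ⟨0, hx⟩
      · obtain ⟨m', hm', hC'⟩ := hπ2 x hx m hC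
        obtain ⟨τ, hτ⟩ := ih (shift x (π x)) m' (by omega) hC'
        refine ⟨1 + τ, ?_⟩
        rw [trajP_add]
        exact hτ
  obtain ⟨τ, i, hi, hτ⟩ := hreach _ h0 (List.ofFn h) (Nat.lt_succ_self _)
    (by rw [runL_ofFn]; exact hCh)
  refine ⟨π, τ + (l.drop i).length, ?_, hF⟩
  rw [trajP_add, ← hτ]
  have := (follow (fun _ => 0) (fun _ _ => 0) π (l.drop i) (runL h (l.take i)) (by
    intro j hj
    have hj' : i + j < l.length := by simp at hj; omega
    rw [← runL_append, ← List.take_add, hF _ hj']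
    simp)).1
  rw [this, ← runL_append, List.take_append_drop, hc]

theorem simple_le {K Δ : ℕ} (μ : Fin K → ℝ) (f : Fin K → ℕ → ℝ)
    (hr : ∀ (h : Hist K Δ) a, 0 ≤ rew μ f h a) (h0 h : Hist K Δ) (π : Hist K Δ → Fin K) (τ : ℕ)
    (l : List (Fin K)) (hl : l ≠ []) (hc : runL h l = h) (hτ : trajP h0 π τ = h)
    (hF : ∀ i (hi : i < l.length), π (runL h (l.take i)) = l[i]) (r : ℝ)
    (hρ : Tendsto
        (fun n : ℕ =>
          (∑ t ∈ Finset.range n, rew μ f (trajP h0 π t) (π (trajP h0 π t))) / n)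
        atTop (nhds r)) : rewL μ f h l ≤ l.length * r := by
  have hpos : 0 < l.length := List.length_pos_iff.2 hl
  have hposR : (0 : ℝ) < l.length := by exact_mod_cast hpos
  obtain ⟨h1, h2⟩ := follow μ f π l h hF
  rw [hc] at h1
  have key : ∀ m : ℕ, trajP h0 π (τ + m * l.length) = h ∧
      (m : ℝ) * rewL μ f h l ≤
        ∑ t ∈ Finset.range (τ + m * l.length), rew μ f (trajP h0 π t) (π (trajP h0 π t)) := by
    intro m
    induction m with
    | zero =>
      refine ⟨by simpa using hτ, ?_⟩
      simp only [Nat.cast_zero, zero_mul]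
      exact Finset.sum_nonneg fun t _ => hr _ _
    | succ m ih =>
      have e : τ + (m + 1) * l.length = (τ + m * l.length) + l.length := by ring
      rw [e]
      refine ⟨by rw [trajP_add, ih.1, h1], ?_⟩
      rw [Finset.sum_range_add]
      simp only [trajP_add h0 π (τ + m * l.length), ih.1, h2]
      push_cast
      linarith [ih.2]
  have hsub : Tendsto (fun m : ℕ => τ + m * l.length) atTop atTop := by
    refine tendsto_atTop_mono (fun m => ?_) tendsto_id
    have : m * 1 ≤ m * l.length := Nat.mul_le_mul_left m hpos
    simp only [id]
    omega
  have hlim := hρ.comp hsub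
  have hcast : Tendsto (fun m : ℕ => ((τ + m * l.length : ℕ) : ℝ)) atTop atTop :=
    tendsto_natCast_atTop_atTop.comp hsub
  -- `m S / (τ + m n)` equals `S / n - (S τ / n) / (τ + m n)`
  have hlow : Tendsto (fun m : ℕ => rewL μ f h l / l.length -
      (rewL μ f h l * τ / l.length) / ((τ + m * l.length : ℕ) : ℝ)) atTop
      (nhds (rewL μ f h l / l.length - 0)) :=
    tendsto_const_nhds.sub (hcast.const_div_atTop _)
  have hle := le_of_tendsto_of_tendsto hlow hlim (by
    filter_upwards [eventually_gt_atTop 0] with m hm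
    have hp : (0 : ℝ) < ((τ + m * l.length : ℕ) : ℝ) := by
      have : 0 < τ + m * l.length := by positivity
      exact_mod_cast this
    simp only [Function.comp]
    rw [le_div_iff₀ hp]
    refine le_trans (le_of_eq ?_) (key m).2
    have hp' := hp.ne'
    rw [sub_mul, div_mul_cancel₀ _ hp']
    push_cast
    field_simp
    ring)
  rw [sub_zero, div_le_iff₀ hposR] at hle
  linarith

theorem closed_le {K Δ : ℕ} (μ : Fin K → ℝ) (f : Fin K → ℕ → ℝ)
    (hr : ∀ (h : Hist K Δ) a, 0 ≤ rew μ f h a) (h0 : Hist K Δ)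
    (ρ : (Hist K Δ → Fin K) → ℝ) (s : ℝ) (hs : ∀ π, ρ π ≤ s)
    (hρ : ∀ π : Hist K Δ → Fin K,
      Tendsto
        (fun n : ℕ =>
          (∑ t ∈ Finset.range n, rew μ f (trajP h0 π t) (π (trajP h0 π t))) / n)
        atTop (nhds (ρ π))) (n : ℕ) :
    ∀ (h : Hist K Δ) (l : List (Fin K)), l.length = n → runL h l = h →
      rewL μ f h l ≤ l.length * s := by
  induction n using Nat.strong_induction_on with
  | _ n ih =>
  intro h l hn hc
  by_cases hl : l = []
  · subst hl; simp [rewL]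
  by_cases hd : ∀ i j, i < j → j < l.length → runL h (l.take i) ≠ runL h (l.take j)
  · obtain ⟨π, τ, hτ, hF⟩ := exists_policy h0 h l hl hc hd
    refine (simple_le μ f hr h0 h π τ l hl hc hτ hF _ (hρ π)).trans ?_
    exact mul_le_mul_of_nonneg_left (hs π) (Nat.cast_nonneg _)
  · push Not at hd
    obtain ⟨i, j, hij, hj, he⟩ := hd
    obtain ⟨l1, l2, l3, rfl, h1, h2⟩ : ∃ l1 l2 l3 : List (Fin K), l = l1 ++ (l2 ++ l3) ∧
        l1.length = i ∧ l2.length = j - i := by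
      refine ⟨l.take i, (l.drop i).take (j - i), (l.drop i).drop (j - i), ?_, ?_, ?_⟩
      · simp only [List.take_append_drop]
      · simp; omega
      · simp; omega
    have t1 : (l1 ++ (l2 ++ l3)).take i = l1 := by rw [← h1]; simp
    have t2 : (l1 ++ (l2 ++ l3)).take j = l1 ++ l2 := by
      have : j = (l1 ++ l2).length := by simp; omega
      rw [this, ← List.append_assoc, List.take_left']
      rfl
    rw [t1, t2, runL_append] at he
    simp only [List.length_append] at hn hj
    have a1 := ih l2.length (by omega) (runL h l1) l2 rfl he.symm
    have hc' : runL h (l1 ++ l3) = h := by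
      rw [runL_append, runL_append, ← he] at hc
      rw [runL_append, hc]
    have a2 := ih (l1 ++ l3).length (by simp; omega) h (l1 ++ l3) rfl hc'
    rw [rewL_append] at a2
    rw [rewL_append, rewL_append, ← he]
    simp only [List.length_append] at *
    push_cast at *
    linarith

/-- The `T`-step reward of every stationary policy — hence of the best stationary
policy — is at most `T·ρ* + Δ`, where `ρ π` is the average reward of `π`
(assumed, as in the paper, to exist as the Cesàro limit of the reward sequence)
and `ρ* = ⨆ π, ρ π` is the optimal average reward. -/
theorem best_stationary_reward_le_avg {K Δ T : ℕ} (hK : 0 < K)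
    (μ : Fin K → ℝ) (hμ : ∀ a, μ a ∈ Set.Icc (0 : ℝ) 1)
    (f : Fin K → ℕ → ℝ) (hf : ∀ a j, j ≤ Δ → f a j ∈ Set.Ioc (0 : ℝ) 1)
    (h0 : Hist K Δ)
    (ρ : (Hist K Δ → Fin K) → ℝ)
    (hρ : ∀ π : Hist K Δ → Fin K,
      Tendsto
        (fun n : ℕ =>
          (∑ t ∈ Finset.range n, rew μ f (trajP h0 π t) (π (trajP h0 π t))) / n)
        atTop (nhds (ρ π))) :
    ∀ π : Hist K Δ → Fin K,
      ∑ t ∈ Finset.range T, rew μ f (trajP h0 π t) (π (trajP h0 π t))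
        ≤ T * (⨆ π' : Hist K Δ → Fin K, ρ π') + Δ := by
  classical
  intro π
  haveI : Nonempty (Hist K Δ → Fin K) := ⟨fun _ => ⟨0, hK⟩⟩
  have hcnt : ∀ (h : Hist K Δ) a, cnt h a ≤ Δ := fun h a => by
    simpa [cnt] using Finset.card_filter_le (Finset.univ : Finset (Fin Δ)) (fun i => h i = a)
  have hr : ∀ (h : Hist K Δ) a, 0 ≤ rew μ f h a := fun h a =>
    mul_nonneg (hf a _ (hcnt h a)).1.le (hμ a).1
  have hr1 : ∀ (h : Hist K Δ) a, rew μ f h a ≤ 1 := fun h a =>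
    mul_le_one₀ (hf a _ (hcnt h a)).2 (hμ a).1 (hμ a).2
  have hs : ∀ π', ρ π' ≤ ⨆ π' : Hist K Δ → Fin K, ρ π' :=
    fun π' => le_ciSup (Set.finite_range ρ).bddAbove π'
  have hs1 : (⨆ π' : Hist K Δ → Fin K, ρ π') ≤ 1 := by
    refine ciSup_le fun π' => le_of_tendsto (hρ π') (Eventually.of_forall fun n => ?_)
    refine div_le_one_of_le₀ ?_ (Nat.cast_nonneg _)
    refine (Finset.sum_le_sum fun t _ => hr1 _ _).trans ?_
    simp
  have hnn : ∀ (l : List (Fin K)) (h : Hist K Δ), 0 ≤ rewL μ f h l := by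
    intro l
    induction l with
    | nil => intro h; simp [rewL]
    | cons a l ih => intro h; exact add_nonneg (hr _ _) (ih _)
  obtain ⟨l, h1, h2, h3⟩ := exists_list μ f π h0 T
  rw [h2]
  have hcl := closed_le μ f hr h0 ρ _ hs hρ _ h0 (l ++ List.ofFn h0) rfl
    (by rw [runL_append, runL_ofFn])
  rw [rewL_append] at hcl
  simp only [List.length_append, List.length_ofFn, h1] at hcl
  push_cast at hcl
  have h4 := hnn (List.ofFn h0) (runL h0 l)
  have h5 := mul_le_mul_of_nonneg_left hs1 (Nat.cast_nonneg (α := ℝ) Δ)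
  linarith
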